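/- For a formula ⟨γ*⟩φ and a world w of a model M with M, w ⊨ ⟨γ*⟩φ, there exists a model chain for (M, w, ⟨γ*⟩φ, φ). -/

import Mathlib

mutual
inductive Fml : Type where
  | var : ℕ → Fml
  | neg : Fml → Fml
  | and : Fml → Fml → Fml
  | or : Fml → Fml → Fml
  | dia : Prog → Fml → Fml
  | box : Prog → Fml → Fml
  deriving DecidableEq
inductive Prog : Type where
  | atom : ℕ → Prog
  | conv : ℕ → Prog
  | seq : Prog → Prog → Prog
  | choice : Prog → Prog → Prog
  | star : Prog → Prog
  | test : Fml → Prog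
  deriving DecidableEq
end

structure Model (W : Type) where
  R : ℕ → W → W → Prop
  V : ℕ → W → Prop

mutual
def Sat {W : Type} (M : Model W) : W → Fml → Prop
  | w, .var p => M.V p w
  | w, .neg φ => ¬ Sat M w φ
  | w, .and φ ψ => Sat M w φ ∧ Sat M w ψ
  | w, .or φ ψ => Sat M w φ ∨ Sat M w ψ
  | w, .dia γ φ => ∃ v, PRel M γ w v ∧ Sat M v φ
  | w, .box γ φ => ∀ v, PRel M γ w v → Sat M v φ
def PRel {W : Type} (M : Model W) : Prog → W → W → Prop
  | .atom a, w, v => M.R a w v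
  | .conv a, w, v => M.R a v w
  | .seq γ δ, w, v => ∃ u, PRel M γ w u ∧ PRel M δ u v
  | .choice γ δ, w, v => PRel M γ w v ∨ PRel M δ w v
  | .star γ, w, v => Relation.ReflTransGen (fun a b => PRel M γ a b) w v
  | .test φ, w, v => w = v ∧ Sat M w φ
end
mutual
def IsNNF : Fml → Prop
  | .var _ => True
  | .neg (.var _) => True
  | .neg _ => False
  | .and φ ψ => IsNNF φ ∧ IsNNF ψ
  | .or φ ψ => IsNNF φ ∧ IsNNF ψ
  | .dia γ φ => IsNNFP γ ∧ IsNNF φ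
  | .box γ φ => IsNNFP γ ∧ IsNNF φ
def IsNNFP : Prog → Prop
  | .atom _ => True
  | .conv _ => True
  | .seq γ δ => IsNNFP γ ∧ IsNNFP δ
  | .choice γ δ => IsNNFP γ ∧ IsNNFP δ
  | .star γ => IsNNFP γ
  | .test φ => IsNNF φ
end

mutual
/-- `nnf φ` is the negation normal form of `φ`. -/
def nnf : Fml → Fml
  | .var p => .var p
  | .neg φ => nnfNeg φ
  | .and φ ψ => .and (nnf φ) (nnf ψ)
  | .or φ ψ => .or (nnf φ) (nnf ψ)
  | .dia γ φ => .dia γ (nnf φ)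
  | .box γ φ => .box γ (nnf φ)
/-- `nnfNeg φ = nnf (¬ φ)`, written `∼φ`. -/
def nnfNeg : Fml → Fml
  | .var p => .neg (.var p)
  | .neg φ => nnf φ
  | .and φ ψ => .or (nnfNeg φ) (nnfNeg ψ)
  | .or φ ψ => .and (nnfNeg φ) (nnfNeg ψ)
  | .dia γ φ => .box γ (nnfNeg φ)
  | .box γ φ => .dia γ (nnfNeg φ)
end

/-- Literal programs: atomic programs or converses of atomic programs. -/
inductive Lit : Type where
  | atom : ℕ → Lit
  | conv : ℕ → Lit
  deriving DecidableEq

def Lit.toProg : Lit → Prog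
  | .atom a => .atom a
  | .conv a => .conv a

/-- The converse `l⁻` of a literal program. -/
def Lit.inv : Lit → Lit
  | .atom a => .conv a
  | .conv a => .atom a

/-- The reduction relation `⤳` on ⟨·⟩-formulae. -/
inductive Red : Fml → Fml → Prop where
  | seq (γ δ χ) : Red (.dia (.seq γ δ) χ) (.dia γ (.dia δ χ))
  | choiceL (γ δ χ) : Red (.dia (.choice γ δ) χ) (.dia γ χ)
  | choiceR (γ δ χ) : Red (.dia (.choice γ δ) χ) (.dia δ χ)
  | star1 (γ χ) : Red (.dia (.star γ) χ) χ
  | star2 (γ χ) : Red (.dia (.star γ) χ) (.dia γ (.dia (.star γ) χ))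
  | test (ϕ χ) : Red (.dia (.test ϕ) χ) χ

/-- `InPre ψ φ` means `φ ∈ pre(ψ)`, i.e. `φ = ⟨γ₁⟩…⟨γ_k⟩ψ`. -/
inductive InPre (ψ : Fml) : Fml → Prop where
  | base : InPre ψ ψ
  | step (γ φ) : InPre ψ φ → InPre ψ (.dia γ φ)

/-- `φ` is an eventuality: `φ = ⟨γ₁⟩…⟨γ_k⟩⟨γ*⟩ψ`. -/
def IsEv (φ : Fml) : Prop := ∃ γ ψ, InPre (.dia (.star γ) ψ) φ

mutual
/-- Size of formulas. -/
def fsize : Fml → ℕ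
  | .var _ => 1
  | .neg (.var _) => 1
  | .neg φ => 1 + fsize φ
  | .and φ ψ => 1 + fsize φ + fsize ψ
  | .or φ ψ => 1 + fsize φ + fsize ψ
  | .dia γ φ => psize γ + fsize φ
  | .box γ φ => psize γ + fsize φ
/-- Size of programs. -/
def psize : Prog → ℕ
  | .atom _ => 1
  | .conv _ => 1
  | .seq γ δ => 1 + psize γ + psize δ
  | .choice γ δ => 1 + psize γ + psize δ
  | .star γ => 1 + psize γ
  | .test φ => 1 + fsize φ
end
/-- One decomposition step generating the closure `cl(φ)`. -/
inductive ClStep : Fml → Fml → Prop where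
  | diaLit (l : Lit) (ψ) : ClStep (.dia l.toProg ψ) ψ
  | boxLit (l : Lit) (ψ) : ClStep (.box l.toProg ψ) ψ
  | andL (φ ψ) : ClStep (.and φ ψ) φ
  | andR (φ ψ) : ClStep (.and φ ψ) ψ
  | orL (φ ψ) : ClStep (.or φ ψ) φ
  | orR (φ ψ) : ClStep (.or φ ψ) ψ
  | boxChoiceL (γ δ φ) : ClStep (.box (.choice γ δ) φ) (.box γ φ)
  | boxChoiceR (γ δ φ) : ClStep (.box (.choice γ δ) φ) (.box δ φ)
  | boxStar1 (γ φ) : ClStep (.box (.star γ) φ) φ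
  | boxStar2 (γ φ) : ClStep (.box (.star γ) φ) (.box γ (.box (.star γ) φ))
  | diaTest1 (ψ φ) : ClStep (.dia (.test ψ) φ) φ
  | diaTest2 (ψ φ) : ClStep (.dia (.test ψ) φ) ψ
  | diaSeq (γ δ φ) : ClStep (.dia (.seq γ δ) φ) (.dia γ (.dia δ φ))
  | boxSeq (γ δ φ) : ClStep (.box (.seq γ δ) φ) (.box γ (.box δ φ))
  | diaChoiceL (γ δ φ) : ClStep (.dia (.choice γ δ) φ) (.dia γ φ)
  | diaChoiceR (γ δ φ) : ClStep (.dia (.choice γ δ) φ) (.dia δ φ)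
  | diaStar1 (γ φ) : ClStep (.dia (.star γ) φ) φ
  | diaStar2 (γ φ) : ClStep (.dia (.star γ) φ) (.dia γ (.dia (.star γ) φ))
  | boxTest1 (ψ φ) : ClStep (.box (.test ψ) φ) φ
  | boxTest2 (ψ φ) : ClStep (.box (.test ψ) φ) (nnfNeg ψ)

/-- The closure `cl(φ)`: the least set containing `φ` and closed under `ClStep`. -/
def Cl (φ : Fml) : Set Fml := {ψ | Relation.ReflTransGen ClStep φ ψ}

/-- A single step of a (model) chain: a literal-program diamond is instantiated,
otherwise a `⤳`-reduction happens at the same world. -/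
def ChainStep {W : Type} (M : Model W) : (W × Fml) → (W × Fml) → Prop
  | (w, .dia (.atom a) χ), (w', χ') => χ' = χ ∧ M.R a w w'
  | (w, .dia (.conv a) χ), (w', χ') => χ' = χ ∧ M.R a w' w
  | (w, χ), (w', χ') => Red χ χ' ∧ w' = w

/-- `σ` is a model chain for `(M, w, φ, ψ)`. -/
def ModelChain {W : Type} (M : Model W) (w : W) (φ ψ : Fml) (σ : List (W × Fml)) : Prop :=
  ∃ h : σ ≠ [], σ.head h = (w, φ) ∧ (σ.getLast h).2 = ψ ∧
    (∀ p ∈ σ, Sat M p.1 p.2) ∧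
    ∀ i, (h1 : i + 1 < σ.length) →
      ChainStep M (σ.get ⟨i, by omega⟩) (σ.get ⟨i + 1, h1⟩)

open Classical in
/-- `ex φ`: the largest non-eventuality `ψ` with `φ ∈ pre(ψ)`. -/
noncomputable def ex : Fml → Fml
  | .dia γ ψ => if IsEv (.dia γ ψ) then ex ψ else .dia γ ψ
  | φ => φ

mutual
/-- `SubF χ φ`: `χ` is a subformula of the formula `φ`. -/
inductive SubF : Fml → Fml → Prop where
  | refl (φ) : SubF φ φ
  | neg {χ φ} : SubF χ φ → SubF χ (.neg φ)
  | andL {χ φ ψ} : SubF χ φ → SubF χ (.and φ ψ)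
  | andR {χ φ ψ} : SubF χ ψ → SubF χ (.and φ ψ)
  | orL {χ φ ψ} : SubF χ φ → SubF χ (.or φ ψ)
  | orR {χ φ ψ} : SubF χ ψ → SubF χ (.or φ ψ)
  | diaF {χ γ φ} : SubF χ φ → SubF χ (.dia γ φ)
  | diaP {χ γ φ} : SubP χ γ → SubF χ (.dia γ φ)
  | boxF {χ γ φ} : SubF χ φ → SubF χ (.box γ φ)
  | boxP {χ γ φ} : SubP χ γ → SubF χ (.box γ φ)
/-- `SubP χ γ`: `χ` is a subformula of the program `γ`. -/
inductive SubP : Fml → Prog → Prop where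
  | seqL {χ γ δ} : SubP χ γ → SubP χ (.seq γ δ)
  | seqR {χ γ δ} : SubP χ δ → SubP χ (.seq γ δ)
  | choiceL {χ γ δ} : SubP χ γ → SubP χ (.choice γ δ)
  | choiceR {χ γ δ} : SubP χ δ → SubP χ (.choice γ δ)
  | star {χ γ} : SubP χ γ → SubP χ (.star γ)
  | test {χ φ} : SubF χ φ → SubP χ (.test φ)
end
/-- `ann` is an annotation for `Γ`: it maps some eventualities `φ ∈ Γ`
to a formula `ann φ ∈ Γ` with `φ ⤳ ann φ`. -/
def IsAnnotation (Γ : Set Fml) (ann : Fml → Option Fml) : Prop :=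
  ∀ φ φ', ann φ = some φ' → φ ∈ Γ ∧ IsEv φ ∧ φ' ∈ Γ ∧ Red φ φ'

/-- `ann` is full on `Γ`: it is defined on all eventualities of `Γ`. -/
def FullAnn (Γ : Set Fml) (ann : Fml → Option Fml) : Prop :=
  ∀ φ ∈ Γ, IsEv φ → (ann φ).isSome

/-- `ann` is non-cyclic: there is no cycle `φ₀, …, φ_n` with `ann φ_i = φ_{i+1 mod n+1}`. -/
def NonCyclic (ann : Fml → Option Fml) : Prop :=
  ¬ ∃ (n : ℕ) (f : ℕ → Fml), (∀ i < n, ann (f i) = some (f (i + 1))) ∧ ann (f n) = some (f 0)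

/-- One step of iterating an annotation (identity where undefined). -/
def annStep (ann : Fml → Option Fml) (φ : Fml) : Fml := (ann φ).getD φ

/-- The pure-formula version of a chain step:
if `χ = ⟨l⟩χ₀` for a literal program `l` then `χ' = χ₀`, else `χ ⤳ χ'`. -/
def FStep : Fml → Fml → Prop
  | .dia (.atom _) χ, χ' => χ' = χ
  | .dia (.conv _) χ, χ' => χ' = χ
  | χ, χ' => Red χ χ'

mutual
/-- The atomic program `d` occurs in a formula. -/
def OccursF (d : ℕ) : Fml → Prop
  | .var _ => False
  | .neg φ => OccursF d φ
  | .and φ ψ => OccursF d φ ∨ OccursF d ψ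
  | .or φ ψ => OccursF d φ ∨ OccursF d ψ
  | .dia γ φ => OccursP d γ ∨ OccursF d φ
  | .box γ φ => OccursP d γ ∨ OccursF d φ
/-- The atomic program `d` occurs in a program (as `d` or `d⁻`). -/
def OccursP (d : ℕ) : Prog → Prop
  | .atom a => a = d
  | .conv a => a = d
  | .seq γ δ => OccursP d γ ∨ OccursP d δ
  | .choice γ δ => OccursP d γ ∨ OccursP d δ
  | .star γ => OccursP d γ
  | .test φ => OccursF d φ
end

/-- `(M, w, chn)` annotated-satisfies `(Γ, ann)`. -/
def AnnSat {W : Type} (M : Model W) (w : W)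
    (chn : Fml → Option (List (W × Fml))) (Γ : Set Fml) (ann : Fml → Option Fml) : Prop :=
  (∀ ψ ∈ Γ, Sat M w ψ) ∧
  (∀ ψ ∈ Γ, IsEv ψ → (chn ψ).isSome) ∧
  (∀ ψ σ, IsEv ψ → chn ψ = some σ →
    ModelChain M w ψ (ex ψ) σ ∧
    (∀ i, (h : i < σ.length) → ∀ χ, σ.get ⟨i, h⟩ = (w, χ) → IsEv χ → chn χ = some (σ.drop i)) ∧
    (∀ ψ', ann ψ = some ψ' → ∃ h : 1 < σ.length, σ.get ⟨1, h⟩ = (w, ψ')))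

/-- A chain step between two pairs whose formulas hold at their worlds. -/
def SatChainStep {W : Type} (M : Model W) (p q : W × Fml) : Prop :=
  ChainStep M p q ∧ Sat M p.1 p.2 ∧ Sat M q.1 q.2

theorem reflTransGen_satChainStep_of_pRel {W : Type} (M : Model W) :
    ∀ (γ : Prog) (w v : W) (χ : Fml), PRel M γ w v → Sat M v χ →
      Relation.ReflTransGen (SatChainStep M) (w, .dia γ χ) (v, χ)
  | .atom a, w, v, χ, h, hχ => by
    refine .single ⟨⟨rfl, ?_⟩, ?_, hχ⟩
    · simpa only [PRel] using h
    · simpa only [Sat] using ⟨v, h, hχ⟩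
  | .conv a, w, v, χ, h, hχ => by
    refine .single ⟨⟨rfl, ?_⟩, ?_, hχ⟩
    · simpa only [PRel] using h
    · simpa only [Sat] using ⟨v, h, hχ⟩
  | .seq γ δ, w, v, χ, h, hχ => by
    have hs : Sat M w (.dia (.seq γ δ) χ) := by simpa only [Sat] using ⟨v, h, hχ⟩
    simp only [PRel] at h
    obtain ⟨u, hγ, hδ⟩ := h
    have hu : Sat M u (.dia δ χ) := by simpa only [Sat] using ⟨v, hδ, hχ⟩
    have hw : Sat M w (.dia γ (.dia δ χ)) := by
      rw [Sat]
      exact ⟨u, hγ, hu⟩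
    exact .head ⟨⟨.seq γ δ χ, rfl⟩, hs, hw⟩
      ((reflTransGen_satChainStep_of_pRel M γ w u _ hγ hu).trans
        (reflTransGen_satChainStep_of_pRel M δ u v χ hδ hχ))
  | .choice γ δ, w, v, χ, h, hχ => by
    have hs : Sat M w (.dia (.choice γ δ) χ) := by simpa only [Sat] using ⟨v, h, hχ⟩
    simp only [PRel] at h
    rcases h with h | h
    · have hw : Sat M w (.dia γ χ) := by simpa only [Sat] using ⟨v, h, hχ⟩
      exact .head ⟨⟨.choiceL γ δ χ, rfl⟩, hs, hw⟩
        (reflTransGen_satChainStep_of_pRel M γ w v χ h hχ)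
    · have hw : Sat M w (.dia δ χ) := by simpa only [Sat] using ⟨v, h, hχ⟩
      exact .head ⟨⟨.choiceR γ δ χ, rfl⟩, hs, hw⟩
        (reflTransGen_satChainStep_of_pRel M δ w v χ h hχ)
  | .star γ, w, v, χ, h, hχ => by
    have sat_star : ∀ u, Relation.ReflTransGen (fun a b => PRel M γ a b) u v →
        Sat M u (.dia (.star γ) χ) := fun u hu => by
      rw [Sat]
      exact ⟨v, by rwa [PRel], hχ⟩
    simp only [PRel] at h
    induction h using Relation.ReflTransGen.head_induction_on with
    | refl => exact .single ⟨⟨.star1 γ χ, rfl⟩, sat_star v .refl, hχ⟩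
    | @head w u hwu huv ih =>
      have hw : Sat M w (.dia γ (.dia (.star γ) χ)) := by
        rw [Sat]
        exact ⟨u, hwu, sat_star u huv⟩
      exact .head ⟨⟨.star2 γ χ, rfl⟩, sat_star w (.head hwu huv), hw⟩
        ((reflTransGen_satChainStep_of_pRel M γ w u _ hwu (sat_star u huv)).trans ih)
  | .test ψ, w, v, χ, h, hχ => by
    have hs : Sat M w (.dia (.test ψ) χ) := by simpa only [Sat] using ⟨v, h, hχ⟩
    simp only [PRel] at h
    obtain ⟨rfl, -⟩ := h
    exact .single ⟨⟨.test ψ χ, rfl⟩, hs, hχ⟩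

theorem exists_modelChain_of_reflTransGen {W : Type} (M : Model W) {p q : W × Fml}
    (h : Relation.ReflTransGen (SatChainStep M) p q) (hq : Sat M q.1 q.2) :
    ∃ σ, ModelChain M p.1 p.2 q.2 σ := by
  induction h using Relation.ReflTransGen.head_induction_on with
  | refl => exact ⟨[q], by simp, rfl, rfl, by simpa using hq, fun i hi => by simp at hi⟩
  | @head p r hpr _ ih =>
    obtain ⟨σ, hne, hhead, hlast, hsat, hstep⟩ := ih
    refine ⟨p :: σ, by simp, rfl, by rwa [List.getLast_cons hne], ?_, ?_⟩
    · rintro x (_ | ⟨_, hx⟩)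
      exacts [hpr.2.1, hsat x hx]
    · rintro (_ | i) hi
      · have h0 : σ[0]'(List.length_pos_iff.mpr hne) = r := by
          rw [← List.head_eq_getElem hne, hhead]
        simpa [h0] using hpr.1
      · exact hstep i (by simpa using hi)

/-- if `M, w ⊨ ⟨γ*⟩φ` then there is a model chain
for `(M, w, ⟨γ*⟩φ, φ)`. -/
theorem star_model_chain {W : Type} (M : Model W) (w : W) (γ : Prog) (φ : Fml)
    (hsat : Sat M w (.dia (.star γ) φ)) :
    ∃ σ, ModelChain M w (.dia (.star γ) φ) φ σ := by
  rw [Sat] at hsat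
  obtain ⟨v, hwv, hv⟩ := hsat
  exact exists_modelChain_of_reflTransGen M
    (reflTransGen_satChainStep_of_pRel M (.star γ) w v φ hwv hv) hv
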